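/- arXiv:1707.07739 — 6 statements merged into one kernel-verified Lean document; each statement's English description precedes it below -/
import Mathlib

section
/- Let θ > 0. Let A be a flow and U a service process on a common probability space, with A MGF-bounded for θ with bounding functions (ρ_A, σ_A), U MGF-bounded for θ with bounding functions (ρ_U, σ_U), and suppose the processes A and U are stochastically independent. Let B be the output of a dynamic U-server with input A, and define the virtual delay d(t) := min{ s ≥ 0 : A(t) ≤ B(t+s) }. If ρ_A(θ) + ρ_U(θ) < 0, then for every t ≥ 0 and every integer T ≥ 0: P(d(t) > T) ≤ e^{θρ_U(θ)T} · e^{θσ_A(θ) + θσ_U(θ)} / (1 − e^{θ(ρ_A(θ)+ρ_U(θ))}). -/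
/-!
If `d(t) > T`, then `B(t+T) < A(t)`, so by the server inequality `A(s) + U(s,t+T) < A(t)` for some
`s`; since `A` is monotone and `U ≥ 0`, necessarily `s < t`. For each `s < t`, Chernoff's bound and
independence bound the probability of `U(s,t+T) ≤ A(s,t)` by `E[exp(θ A(s,t))] E[exp(-θ U(s,t+T))]`,
and hence by a constant times `q ^ (t - s)` with `q = exp(θ (ρA + ρU))`. The union bound gives a
partial geometric sum, valid without stability; when `q < 1` it is at most `1 / (1 - q)`.
-/

open MeasureTheory ProbabilityTheory

section SamplePath

/-- The virtual delay at time `t` of a server with input `a` and output `b`: the least `s` with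
`a t ≤ b (t + s)`. It takes values in `ℕ∞`, being `⊤` when there is no such `s`. -/
noncomputable def virtualDelay {α : Type*} [LE α] (a b : ℕ → α) (t : ℕ) : ℕ∞ :=
  ⨅ (s : ℕ) (_ : a t ≤ b (t + s)), (s : ℕ∞)

lemma natCast_lt_virtualDelay_iff {α : Type*} [LE α] {a b : ℕ → α} {t T : ℕ} :
    (T : ℕ∞) < virtualDelay a b t ↔ ∀ s, a t ≤ b (t + s) → T < s := by
  rw [virtualDelay, ← ENat.natCast_add_one_le_iff]
  simp only [le_iInf_iff, ENat.natCast_add_one_le_iff, Nat.cast_lt]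

lemma lt_of_natCast_lt_virtualDelay {α : Type*} [LinearOrder α] {a b : ℕ → α} {t T : ℕ}
    (h : (T : ℕ∞) < virtualDelay a b t) : b (t + T) < a t :=
  lt_of_not_ge fun hT => (natCast_lt_virtualDelay_iff.1 h T hT).false

lemma exists_lt_add_lt_of_sInf_lt {ι α : Type*} [LinearOrder ι] [AddZeroClass α]
    [ConditionallyCompleteLinearOrder α] [AddLeftMono α] {a u : ι → α} {S : Set ι} {t : ι}
    (ha : Monotone a) (hu : ∀ s ∈ S, 0 ≤ u s) (hS : S.Nonempty)
    (h : sInf ((fun s => a s + u s) '' S) < a t) : ∃ s < t, a s + u s < a t := by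
  obtain ⟨_, ⟨s, hs, rfl⟩, hlt⟩ := exists_lt_of_csInf_lt (hS.image _) h
  exact ⟨s, ha.reflect_lt ((le_add_of_nonneg_right (hu s hs)).trans_lt hlt), hlt⟩

end SamplePath

section ExponentialBound

variable {Ω : Type*} [MeasurableSpace Ω]

/-- The bivariate process `X` has `E[exp(η X(s,t))] ≤ exp(r (t - s) + c)` for all `s ≤ t`.
A flow `A` is MGF-bounded for `θ` by `(ρ, σ)` when this holds for its increments with `η = θ`,
`r = θ ρ`, `c = θ σ`; a service process `U` is when it holds for `U` with `η = -θ`.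
The expectation is a lower Lebesgue integral, so that the bound entails its finiteness. -/
def IsMGFBounded (P : Measure Ω) (η : ℝ) (X : ℕ → ℕ → Ω → ℝ) (r c : ℝ) : Prop :=
  ∀ s t, s ≤ t → ∫⁻ ω, ENNReal.ofReal (Real.exp (η * X s t ω)) ∂P
    ≤ ENNReal.ofReal (Real.exp (r * ((t : ℝ) - (s : ℝ)) + c))

variable {P : Measure Ω}

lemma measure_le_le_lintegral_exp_mul_lintegral_exp {Y V : Ω → ℝ} {θ : ℝ} (hθ : 0 ≤ θ)
    (hY : AEMeasurable Y P) (hV : AEMeasurable V P) (hYV : IndepFun Y V P) :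
    P {ω | V ω ≤ Y ω} ≤ (∫⁻ ω, ENNReal.ofReal (Real.exp (θ * Y ω)) ∂P) *
      ∫⁻ ω, ENNReal.ofReal (Real.exp (-θ * V ω)) ∂P := by
  have hexp (η : ℝ) : Measurable fun x => ENNReal.ofReal (Real.exp (η * x)) := by fun_prop
  have hfY := (hexp θ).comp_aemeasurable hY
  have hfV := (hexp (-θ)).comp_aemeasurable hV
  have hsub : {ω | V ω ≤ Y ω} ⊆ {ω | 1 ≤ ENNReal.ofReal (Real.exp (θ * Y ω)) *
      ENNReal.ofReal (Real.exp (-θ * V ω))} := fun ω (hω : V ω ≤ Y ω) => by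
    rw [Set.mem_ofPred_eq, ← ENNReal.ofReal_mul (Real.exp_nonneg _), ← Real.exp_add,
      ENNReal.one_le_ofReal, Real.one_le_exp_iff]
    linarith [mul_le_mul_of_nonneg_left hω hθ]
  calc P {ω | V ω ≤ Y ω}
      ≤ 1 * P {ω | 1 ≤ ENNReal.ofReal (Real.exp (θ * Y ω)) *
          ENNReal.ofReal (Real.exp (-θ * V ω))} := by
        rw [one_mul]
        exact measure_mono hsub
    _ ≤ ∫⁻ ω, ENNReal.ofReal (Real.exp (θ * Y ω)) * ENNReal.ofReal (Real.exp (-θ * V ω)) ∂P :=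
        mul_meas_ge_le_lintegral₀ (hfY.mul hfV) 1
    _ = _ := lintegral_mul_eq_lintegral_mul_lintegral_of_indepFun'' hfY hfV
        (hYV.comp (hexp θ) (hexp (-θ)))

lemma IsMGFBounded.measure_le_le_exp {X V : ℕ → ℕ → Ω → ℝ} {θ r c r' c' : ℝ} {s t u v : ℕ}
    (hX : IsMGFBounded P θ X r c) (hV : IsMGFBounded P (-θ) V r' c') (hθ : 0 ≤ θ)
    (hst : s ≤ t) (huv : u ≤ v) (hXm : AEMeasurable (X s t) P) (hVm : AEMeasurable (V u v) P)
    (hXV : IndepFun (X s t) (V u v) P) :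
    P {ω | V u v ω ≤ X s t ω} ≤
      ENNReal.ofReal (Real.exp (r * ((t : ℝ) - s) + c + (r' * ((v : ℝ) - u) + c'))) := by
  rw [Real.exp_add, ENNReal.ofReal_mul (Real.exp_nonneg _)]
  exact (measure_le_le_lintegral_exp_mul_lintegral_exp hθ hXm hVm hXV).trans
    (mul_le_mul' (hX s t hst) (hV u v huv))

end ExponentialBound

lemma indepFun_of_indep {Ω β γ : Type*} [MeasurableSpace Ω] [MeasurableSpace β]
    [MeasurableSpace γ] {P : Measure Ω} {m₁ m₂ : MeasurableSpace Ω} {f : Ω → β} {g : Ω → γ}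
    (h : Indep m₁ m₂ P) (hf : Measurable[m₁] f) (hg : Measurable[m₂] g) : IndepFun f g P :=
  indep_of_indep_of_le_left (indep_of_indep_of_le_right h hg.comap_le) hf.comap_le

lemma measurable_iSup_comap {Ω ι β : Type*} [MeasurableSpace β] (X : ι → Ω → β) (i : ι) :
    Measurable[⨆ j, MeasurableSpace.comap (X j) inferInstance] (X i) :=
  Measurable.of_comap_le (le_iSup (fun j => MeasurableSpace.comap (X j) inferInstance) i)

lemma sum_range_pow_sub {R : Type*} [Semiring R] (q : R) (t : ℕ) :
    ∑ s ∈ Finset.range t, q ^ (t - s) = ∑ k ∈ Finset.Ico 1 (t + 1), q ^ k := by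
  rw [Finset.range_eq_Ico, Finset.sum_Ico_reflect (fun k => q ^ k) 0 t.le_succ,
    Nat.add_sub_cancel_left, Nat.sub_zero]

lemma geom_sum_Ico_le_one_div {K : Type*} [Field K] [LinearOrder K] [IsStrictOrderedRing K] {q : K}
    (hq0 : 0 ≤ q) (hq1 : q < 1) (m n : ℕ) : ∑ k ∈ Finset.Ico m n, q ^ k ≤ 1 / (1 - q) :=
  (geom_sum_Ico_le_of_lt_one hq0 hq1).trans
    (div_le_div_of_nonneg_right (pow_le_one₀ hq0 hq1.le) (sub_pos.2 hq1).le)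

theorem delay_bound_general {Ω : Type*} [MeasurableSpace Ω] {P : Measure Ω} {θ : ℝ} (hθ : 0 ≤ θ)
    {A B : ℕ → Ω → ℝ} {U : ℕ → ℕ → Ω → ℝ} {ρA σA ρU σU : ℝ} {t T : ℕ}
    (hAmeas : ∀ s, AEMeasurable (A s) P) (hAmono : ∀ ω, Monotone fun s => A s ω)
    (hUmeas : ∀ s, AEMeasurable (U s (t + T)) P) (hUnonneg : ∀ s ≤ t + T, ∀ ω, 0 ≤ U s (t + T) ω)
    (hAbound : IsMGFBounded P θ (fun s t ω => A t ω - A s ω) (θ * ρA) (θ * σA))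
    (hUbound : IsMGFBounded P (-θ) U (θ * ρU) (θ * σU))
    (hIndep : ∀ s < t, IndepFun (fun ω => A t ω - A s ω) (U s (t + T)) P)
    (hServer : ∀ ω, sInf ((fun s => A s ω + U s (t + T) ω) '' Set.Icc 0 (t + T)) ≤ B (t + T) ω) :
    P {ω | (T : ℕ∞) < virtualDelay (A · ω) (B · ω) t} ≤
      ENNReal.ofReal (Real.exp (θ * ρU * T) * Real.exp (θ * σA + θ * σU) *
        ∑ k ∈ Finset.Ico 1 (t + 1), Real.exp (θ * (ρA + ρU)) ^ k) := by
  have hsub : {ω | (T : ℕ∞) < virtualDelay (A · ω) (B · ω) t} ⊆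
      ⋃ s ∈ Finset.range t, {ω | U s (t + T) ω ≤ A t ω - A s ω} := fun ω hω => by
    obtain ⟨s, hst, hs⟩ := exists_lt_add_lt_of_sInf_lt (hAmono ω) (fun s hs => hUnonneg s hs.2 ω)
      (Set.nonempty_Icc.2 (Nat.zero_le _)) ((hServer ω).trans_lt (lt_of_natCast_lt_virtualDelay hω))
    exact Set.mem_biUnion (Finset.mem_coe.2 (Finset.mem_range.2 hst)) (le_sub_iff_add_le'.2 hs.le)
  have hterm : ∀ s ∈ Finset.range t, P {ω | U s (t + T) ω ≤ A t ω - A s ω} ≤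
      ENNReal.ofReal (Real.exp (θ * ρU * T) * Real.exp (θ * σA + θ * σU) *
        Real.exp (θ * (ρA + ρU)) ^ (t - s)) := fun s hs => by
    have hlt : s < t := Finset.mem_range.1 hs
    have hst : s ≤ t := hlt.le
    refine (hAbound.measure_le_le_exp hUbound hθ hst (Nat.le_add_right_of_le hst)
      ((hAmeas t).sub (hAmeas s)) (hUmeas s) (hIndep s hlt)).trans_eq ?_
    rw [← Real.exp_nat_mul, ← Real.exp_add, ← Real.exp_add, Nat.cast_sub hst, Nat.cast_add]
    ring_nf
  calc P {ω | (T : ℕ∞) < virtualDelay (A · ω) (B · ω) t}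
      ≤ ∑ s ∈ Finset.range t, P {ω | U s (t + T) ω ≤ A t ω - A s ω} :=
        (measure_mono hsub).trans (measure_biUnion_finset_le _ _)
    _ ≤ ∑ s ∈ Finset.range t, ENNReal.ofReal (Real.exp (θ * ρU * T) *
          Real.exp (θ * σA + θ * σU) * Real.exp (θ * (ρA + ρU)) ^ (t - s)) :=
        Finset.sum_le_sum hterm
    _ = _ := by
        rw [← ENNReal.ofReal_sum_of_nonneg fun s _ => by positivity, ← Finset.mul_sum,
          sum_range_pow_sub]

/-- Virtual delay bound for a single dynamic server (Theorem 1, delay part).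
The virtual delay `d(t) = min { s ≥ 0 | A(t) ≤ B(t+s) }` exceeds `T` exactly on the event
`{ω | every s with A(t) ≤ B(t+s) satisfies s > T}` (with `min ∅ = ∞`). -/
theorem delay_bound
    {Ω : Type*} [MeasurableSpace Ω] (P : Measure Ω) [IsProbabilityMeasure P]
    (θ : ℝ) (hθ : 0 < θ)
    (A B : ℕ → Ω → ℝ) (U : ℕ → ℕ → Ω → ℝ)
    (ρA σA ρU σU : ℝ)
    -- A is a flow
    (hAmeas : ∀ t, Measurable (A t))
    (hAmono : ∀ ω, Monotone fun t => A t ω)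
    (hAzero : ∀ ω, A 0 ω = 0)
    -- U is a service process
    (hUmeas : ∀ s t, Measurable (U s t))
    (hUnonneg : ∀ s t, s ≤ t → ∀ ω, 0 ≤ U s t ω)
    -- MGF bound for A
    (hAbound : ∀ s t, s ≤ t →
      ∫⁻ ω, ENNReal.ofReal (Real.exp (θ * (A t ω - A s ω))) ∂P
        ≤ ENNReal.ofReal (Real.exp (θ * ρA * ((t : ℝ) - (s : ℝ)) + θ * σA)))
    -- MGF bound for U
    (hUbound : ∀ s t, s ≤ t →
      ∫⁻ ω, ENNReal.ofReal (Real.exp (-θ * U s t ω)) ∂P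
        ≤ ENNReal.ofReal (Real.exp (θ * ρU * ((t : ℝ) - (s : ℝ)) + θ * σU)))
    -- A and U are stochastically independent
    (hIndep : Indep (⨆ t, MeasurableSpace.comap (A t) inferInstance)
      (⨆ p : ℕ × ℕ, MeasurableSpace.comap (U p.1 p.2) inferInstance) P)
    -- B is the output of a dynamic U-server with input A (and is a flow)
    (hBmeas : ∀ t, Measurable (B t))
    (hBmono : ∀ ω, Monotone fun t => B t ω)
    (hBzero : ∀ ω, B 0 ω = 0)
    (hServer : ∀ t ω, sInf ((fun s => A s ω + U s t ω) '' Set.Icc 0 t) ≤ B t ω)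
    (hBleA : ∀ t ω, B t ω ≤ A t ω)
    -- stability condition
    (hstab : ρA + ρU < 0)
    (t : ℕ) (T : ℕ) :
    P {ω | ∀ s : ℕ, A t ω ≤ B (t + s) ω → T < s}
      ≤ ENNReal.ofReal (Real.exp (θ * ρU * (T : ℝ)) * Real.exp (θ * σA + θ * σU)
          / (1 - Real.exp (θ * (ρA + ρU)))) := by
  have hq1 : Real.exp (θ * (ρA + ρU)) < 1 :=
    Real.exp_lt_one_iff.2 (mul_neg_of_pos_of_neg hθ hstab)
  have hAU (s : ℕ) : IndepFun (fun ω => A t ω - A s ω) (U s (t + T)) P :=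
    indepFun_of_indep hIndep ((measurable_iSup_comap A t).sub (measurable_iSup_comap A s))
      (measurable_iSup_comap (fun p : ℕ × ℕ => U p.1 p.2) (s, t + T))
  calc P {ω | ∀ s : ℕ, A t ω ≤ B (t + s) ω → T < s}
      = P {ω | (T : ℕ∞) < virtualDelay (A · ω) (B · ω) t} := by
        simp only [natCast_lt_virtualDelay_iff]
    _ ≤ ENNReal.ofReal (Real.exp (θ * ρU * T) * Real.exp (θ * σA + θ * σU) *
          ∑ k ∈ Finset.Ico 1 (t + 1), Real.exp (θ * (ρA + ρU)) ^ k) :=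
        delay_bound_general hθ.le (fun s => (hAmeas s).aemeasurable) hAmono
          (fun s => (hUmeas s _).aemeasurable) (fun s => hUnonneg s _) hAbound hUbound
          (fun s _ => hAU s) (hServer _)
    _ ≤ _ := by
        rw [div_eq_mul_one_div]
        gcongr
        exact geom_sum_Ico_le_one_div (Real.exp_nonneg _) hq1 _ _
end

section
/- (Tandem reduction, deterministic part of the convolution lemma.) Let A, B, C be flows and U₁, U₂ service processes. If B(t) ≥ min_{0≤s≤t} (A(s) + U₁(s,t)) for all t and C(t) ≥ min_{0≤s≤t} (B(s) + U₂(s,t)) for all t, then C(t) ≥ min_{0≤s≤t} (A(s) + (U₁ ⊗ U₂)(s,t)) for all t, where (U₁ ⊗ U₂)(s,t) := min_{s≤r≤t} (U₁(s,r) + U₂(r,t)). In other words, a tandem of a dynamic U₁-server followed by a dynamic U₂-server is a dynamic (U₁ ⊗ U₂)-server. -/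
open MeasureTheory

/-! On each sample path the server hypotheses read `A ⊗ U₁ ≤ B` and `B ⊗ U₂ ≤ C`. Min-plus
convolution is associative and monotone in its left argument, so
`A ⊗ (U₁ ⊗ U₂) = (A ⊗ U₁) ⊗ U₂ ≤ B ⊗ U₂ ≤ C`.
Associativity holds because a minimum over finitely many intermediate times is attained, hence
commutes with the addition of a constant: both sides of `(U ⊗ V) ⊗ W = U ⊗ (V ⊗ W)` at `(s, t)` are
the minimum of `U s q + V q r + W r t` over `s ≤ q ≤ r ≤ t`. -/

lemma le_map_sInf_image_iff {ι R S : Type*} [ConditionallyCompleteLinearOrder R] [Preorder S]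
    {f : R → S} (hf : Monotone f) {I : Set ι} (hI : I.Finite) (hne : I.Nonempty) {g : ι → R}
    {x : S} : x ≤ f (sInf (g '' I)) ↔ ∀ i ∈ I, x ≤ f (g i) := by
  refine ⟨fun h i hi => h.trans (hf ?_), fun h => ?_⟩
  · exact csInf_le (hI.image g).bddBelow (Set.mem_image_of_mem g hi)
  · obtain ⟨i, hi, hmin⟩ := (hne.image g).csInf_mem (hI.image g)
    exact hmin ▸ h i hi

section MinPlus

variable {T R : Type*} [Preorder T] [ConditionallyCompleteLinearOrder R]

/-- The min-plus convolution of two bivariate processes along a sample path. The infimum is a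
minimum when `s ≤ t` and the interval `[s, t]` is finite; it takes a junk value when `¬ s ≤ t`. -/
noncomputable def minPlusConv [Add R] (U V : T → T → R) (s t : T) : R :=
  sInf ((fun r => U s r + V r t) '' Set.Icc s t)

local infixl:70 " ⊗ " => minPlusConv

/-- A sample path of a dynamic `U`-server with arrivals `A` and departures `D`. The univariate
convolution `A ⊗ U` is encoded by regarding `A` as a bivariate process that ignores its first
argument, started at the least time `⊥`. -/
def IsDynamicServer [Add R] [OrderBot T] (U : T → T → R) (A D : T → R) : Prop :=
  ∀ t, ((fun _ => A) ⊗ U) ⊥ t ≤ D t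

variable [LocallyFiniteOrder T] {s t : T}

lemma le_map_minPlusConv_iff [Add R] {S : Type*} [Preorder S] {f : R → S} (hf : Monotone f)
    (hst : s ≤ t) {U V : T → T → R} {x : S} :
    x ≤ f ((U ⊗ V) s t) ↔ ∀ r ∈ Set.Icc s t, x ≤ f (U s r + V r t) :=
  le_map_sInf_image_iff hf (Set.finite_Icc s t) (Set.nonempty_Icc.2 hst)

lemma le_minPlusConv_iff [Add R] (hst : s ≤ t) {U V : T → T → R} {x : R} :
    x ≤ (U ⊗ V) s t ↔ ∀ r ∈ Set.Icc s t, x ≤ U s r + V r t :=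
  le_map_minPlusConv_iff monotone_id hst

lemma minPlusConv_le_minPlusConv_left [Add R] [AddRightMono R] (hst : s ≤ t)
    {U U' : T → T → R} (V : T → T → R) (hU : ∀ r ∈ Set.Icc s t, U s r ≤ U' s r) :
    (U ⊗ V) s t ≤ (U' ⊗ V) s t :=
  (le_minPlusConv_iff hst).2 fun r hr =>
    ((le_minPlusConv_iff hst).1 le_rfl r hr).trans (add_le_add_left (hU r hr) _)

variable [AddSemigroup R] [AddLeftMono R] [AddRightMono R]

theorem minPlusConv_assoc (hst : s ≤ t) (U V W : T → T → R) :
    (U ⊗ V ⊗ W) s t = (U ⊗ (V ⊗ W)) s t := by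
  refine eq_of_forall_le_iff fun x => ?_
  calc x ≤ (U ⊗ V ⊗ W) s t
      ↔ ∀ r ∈ Set.Icc s t, ∀ q ∈ Set.Icc s r, x ≤ U s q + V q r + W r t :=
        (le_minPlusConv_iff hst).trans <| forall₂_congr fun r hr =>
          le_map_minPlusConv_iff (f := (· + W r t)) add_left_mono hr.1
    _ ↔ ∀ q ∈ Set.Icc s t, ∀ r ∈ Set.Icc q t, x ≤ U s q + (V q r + W r t) := by
        simp only [← add_assoc]
        exact ⟨fun h q hq r hr => h r ⟨hq.1.trans hr.1, hr.2⟩ q ⟨hq.1, hr.1⟩,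
          fun h r hr q hq => h q ⟨hq.1, hq.2.trans hr.2⟩ r ⟨hq.2, hr.2⟩⟩
    _ ↔ x ≤ (U ⊗ (V ⊗ W)) s t :=
        ((le_minPlusConv_iff hst).trans <| forall₂_congr fun q hq =>
          le_map_minPlusConv_iff (f := (U s q + ·)) add_right_mono hq.2).symm

theorem tandem_reduction_general [OrderBot T] {A B C : T → R} {U₁ U₂ : T → T → R}
    (hB : IsDynamicServer U₁ A B) (hC : IsDynamicServer U₂ B C) :
    IsDynamicServer (U₁ ⊗ U₂) A C := fun t =>
  calc ((fun _ => A) ⊗ (U₁ ⊗ U₂)) ⊥ t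
      = ((fun _ => A) ⊗ U₁ ⊗ U₂) ⊥ t := (minPlusConv_assoc bot_le _ _ _).symm
    _ ≤ ((fun _ => B) ⊗ U₂) ⊥ t := minPlusConv_le_minPlusConv_left bot_le U₂ fun r _ => hB r
    _ ≤ C t := hC t

end MinPlus

/-- Tandem reduction: a dynamic `U₁`-server followed by a dynamic `U₂`-server is a
dynamic `(U₁ ⊗ U₂)`-server, where `(U₁ ⊗ U₂)(s,t) = min_{s ≤ r ≤ t} (U₁(s,r) + U₂(r,t))`. -/
theorem tandem_reduction
    {Ω : Type*}
    (A B C : ℕ → Ω → ℝ) (U₁ U₂ : ℕ → ℕ → Ω → ℝ)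
    -- A, B, C are flows
    (hAmono : ∀ ω, Monotone fun t => A t ω) (hAzero : ∀ ω, A 0 ω = 0)
    (hBmono : ∀ ω, Monotone fun t => B t ω) (hBzero : ∀ ω, B 0 ω = 0)
    (hCmono : ∀ ω, Monotone fun t => C t ω) (hCzero : ∀ ω, C 0 ω = 0)
    -- U₁, U₂ are service processes
    (hU₁nonneg : ∀ s t, s ≤ t → ∀ ω, 0 ≤ U₁ s t ω)
    (hU₂nonneg : ∀ s t, s ≤ t → ∀ ω, 0 ≤ U₂ s t ω)
    -- server properties
    (hB : ∀ t ω, sInf ((fun s => A s ω + U₁ s t ω) '' Set.Icc 0 t) ≤ B t ω)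
    (hC : ∀ t ω, sInf ((fun s => B s ω + U₂ s t ω) '' Set.Icc 0 t) ≤ C t ω) :
    ∀ t ω, sInf ((fun s => A s ω +
        sInf ((fun r => U₁ s r ω + U₂ r t ω) '' Set.Icc s t)) '' Set.Icc 0 t) ≤ C t ω :=
  fun t ω => tandem_reduction_general (hB · ω) (hC · ω) t
end

section
/- (Leftover service under arbitrary multiplexing, independent case.) Let θ > 0. Let A be a flow and U a service process on a common probability space, stochastically independent, with A MGF-bounded for θ with bounding functions (ρ_A, σ_A) and U MGF-bounded for θ with bounding functions (ρ_U, σ_U). Then the leftover service process U_l(s,t) := max(U(s,t) − A(s,t), 0) is MGF-bounded for θ with bounding functions ρ(θ) = ρ_A(θ) + ρ_U(θ) and σ(θ) = σ_A(θ) + σ_U(θ); that is, E[e^{−θ U_l(s,t)}] ≤ e^{θ(ρ_A(θ)+ρ_U(θ))(t−s) + θ(σ_A(θ)+σ_U(θ))} for all s ≤ t. -/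
open MeasureTheory ProbabilityTheory

/-!
Since `max x 0 ≥ x`, the leftover service dominates the difference `U(s,t) - A(s,t)`, so for
`θ ≥ 0` its exponential moment at `-θ` is at most that of the difference. That exponential is the
product of `exp (θ A(s,t))` and `exp (-θ U(s,t))`; these are independent, so the expectations, and
with them the two bounds, multiply.
-/

section Independence

variable {Ω : Type*} {mΩ : MeasurableSpace Ω} {P : Measure Ω}

lemma lintegral_exp_add_of_indepFun {X Y : Ω → ℝ} (hX : AEMeasurable X P)
    (hY : AEMeasurable Y P) (hXY : IndepFun X Y P) :
    ∫⁻ ω, ENNReal.ofReal (Real.exp (X ω + Y ω)) ∂P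
      = (∫⁻ ω, ENNReal.ofReal (Real.exp (X ω)) ∂P)
        * ∫⁻ ω, ENNReal.ofReal (Real.exp (Y ω)) ∂P := by
  have hexp : Measurable fun x : ℝ => ENNReal.ofReal (Real.exp x) := by fun_prop
  simp only [Real.exp_add, ENNReal.ofReal_mul (Real.exp_nonneg _)]
  exact lintegral_mul_eq_lintegral_mul_lintegral_of_indepFun'' (hexp.comp_aemeasurable hX)
    (hexp.comp_aemeasurable hY) (hXY.comp hexp hexp)

lemma indepFun_sub_of_indep_iSup_comap {ι κ β γ : Type*} [Sub β] [mβ : MeasurableSpace β]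
    [MeasurableSub₂ β] [mγ : MeasurableSpace γ] {X : ι → Ω → β} {Y : κ → Ω → γ}
    (h : Indep (⨆ i, mβ.comap (X i)) (⨆ k, mγ.comap (Y k)) P) (i j : ι) (k : κ) :
    IndepFun (fun ω => X i ω - X j ω) (Y k) P := by
  have hX (l : ι) : Measurable[⨆ i, mβ.comap (X i)] (X l) :=
    Measurable.iSup' l (comap_measurable (X l))
  have hY : Measurable[⨆ k, mγ.comap (Y k)] (Y k) := Measurable.iSup' k (comap_measurable (Y k))
  exact indep_of_indep_of_le h ((hX i).sub (hX j)).comap_le hY.comap_le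

end Independence

/-- For all `s ≤ t`, the moment generating function of `X s t` at `θ` is at most `exp (b s t)`.
A flow with increments `A s t` is MGF-bounded for `θ` with bounding functions `(ρ, σ)` when this
holds at `θ` with `b s t = θ * ρ * (t - s) + θ * σ`, and a service process when it holds at `-θ`
with the same `b`. The expectation is a Lebesgue integral in `[0, ∞]`, so the bound includes
finiteness of the moment. -/
def MGFBoundedBy {Ω T : Type*} [MeasurableSpace Ω] [LE T] (P : Measure Ω) (θ : ℝ)
    (X : T → T → Ω → ℝ) (b : T → T → ℝ) : Prop :=
  ∀ s t, s ≤ t →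
    ∫⁻ ω, ENNReal.ofReal (Real.exp (θ * X s t ω)) ∂P ≤ ENNReal.ofReal (Real.exp (b s t))

namespace MGFBoundedBy

variable {Ω T : Type*} [MeasurableSpace Ω] [LE T] {P : Measure Ω} {θ : ℝ}
  {X Y : T → T → Ω → ℝ} {b c : T → T → ℝ}

lemma neg (hX : MGFBoundedBy P θ X b) : MGFBoundedBy P (-θ) (-X) b := by
  simpa only [MGFBoundedBy, Pi.neg_apply, neg_mul_neg] using hX

lemma of_le_of_nonpos (hθ : θ ≤ 0) (hX : MGFBoundedBy P θ X b)
    (hXY : ∀ s t, s ≤ t → ∀ᵐ ω ∂P, X s t ω ≤ Y s t ω) : MGFBoundedBy P θ Y b := by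
  intro s t hst
  refine (lintegral_mono_ae ?_).trans (hX s t hst)
  filter_upwards [hXY s t hst] with ω hω
  exact ENNReal.ofReal_le_ofReal (Real.exp_le_exp.mpr (mul_le_mul_of_nonpos_left hω hθ))

lemma add_of_indepFun (hX : MGFBoundedBy P θ X b) (hY : MGFBoundedBy P θ Y c)
    (hXm : ∀ s t, s ≤ t → AEMeasurable (X s t) P) (hYm : ∀ s t, s ≤ t → AEMeasurable (Y s t) P)
    (hXY : ∀ s t, s ≤ t → IndepFun (X s t) (Y s t) P) : MGFBoundedBy P θ (X + Y) (b + c) := by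
  intro s t hst
  have hmul : Measurable fun x : ℝ => θ * x := by fun_prop
  calc ∫⁻ ω, ENNReal.ofReal (Real.exp (θ * (X + Y) s t ω)) ∂P
      = (∫⁻ ω, ENNReal.ofReal (Real.exp (θ * X s t ω)) ∂P)
          * ∫⁻ ω, ENNReal.ofReal (Real.exp (θ * Y s t ω)) ∂P := by
        simp only [Pi.add_apply, mul_add]
        exact lintegral_exp_add_of_indepFun (hmul.comp_aemeasurable (hXm s t hst))
          (hmul.comp_aemeasurable (hYm s t hst)) ((hXY s t hst).comp hmul hmul)
    _ ≤ ENNReal.ofReal (Real.exp (b s t)) * ENNReal.ofReal (Real.exp (c s t)) := by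
        gcongr
        exacts [hX s t hst, hY s t hst]
    _ = ENNReal.ofReal (Real.exp ((b + c) s t)) := by
        rw [← ENNReal.ofReal_mul (Real.exp_nonneg _), ← Real.exp_add, Pi.add_apply, Pi.add_apply]

end MGFBoundedBy

theorem leftover_independent_general {Ω T : Type*} [MeasurableSpace Ω] [LE T] {P : Measure Ω}
    {θ : ℝ} (hθ : 0 ≤ θ) {A U : T → T → Ω → ℝ} {b c : T → T → ℝ}
    (hAmeas : ∀ s t, s ≤ t → AEMeasurable (A s t) P)
    (hUmeas : ∀ s t, s ≤ t → AEMeasurable (U s t) P)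
    (hA : MGFBoundedBy P θ A b) (hU : MGFBoundedBy P (-θ) U c)
    (hAU : ∀ s t, s ≤ t → IndepFun (A s t) (U s t) P) :
    MGFBoundedBy P (-θ) (fun s t ω => max (U s t ω - A s t ω) 0) (b + c) := by
  have hdiff : MGFBoundedBy P (-θ) (-A + U) (b + c) :=
    hA.neg.add_of_indepFun hU (fun s t hst => (hAmeas s t hst).neg) hUmeas
      fun s t hst => (hAU s t hst).neg_left
  refine hdiff.of_le_of_nonpos (neg_nonpos.mpr hθ) fun s t _ => ae_of_all P fun ω => ?_
  exact (neg_add_eq_sub (A s t ω) (U s t ω)).trans_le (le_max_left _ _)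

/-- Leftover service under arbitrary multiplexing (strict priority), independent case. -/
theorem leftover_independent
    {Ω : Type*} [MeasurableSpace Ω] (P : Measure Ω) [IsProbabilityMeasure P]
    (θ : ℝ) (hθ : 0 < θ)
    (A : ℕ → Ω → ℝ) (U : ℕ → ℕ → Ω → ℝ)
    (ρA σA ρU σU : ℝ)
    -- A is a flow
    (hAmeas : ∀ t, Measurable (A t))
    (hAmono : ∀ ω, Monotone fun t => A t ω)
    (hAzero : ∀ ω, A 0 ω = 0)
    -- U is a service process
    (hUmeas : ∀ s t, Measurable (U s t))
    (hUnonneg : ∀ s t, s ≤ t → ∀ ω, 0 ≤ U s t ω)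
    -- MGF bounds
    (hAbound : ∀ s t, s ≤ t →
      ∫⁻ ω, ENNReal.ofReal (Real.exp (θ * (A t ω - A s ω))) ∂P
        ≤ ENNReal.ofReal (Real.exp (θ * ρA * ((t : ℝ) - (s : ℝ)) + θ * σA)))
    (hUbound : ∀ s t, s ≤ t →
      ∫⁻ ω, ENNReal.ofReal (Real.exp (-θ * U s t ω)) ∂P
        ≤ ENNReal.ofReal (Real.exp (θ * ρU * ((t : ℝ) - (s : ℝ)) + θ * σU)))
    -- stochastic independence of A and U
    (hIndep : Indep (⨆ t, MeasurableSpace.comap (A t) inferInstance)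
      (⨆ p : ℕ × ℕ, MeasurableSpace.comap (U p.1 p.2) inferInstance) P) :
    -- the leftover service U_l(s,t) = [U(s,t) − A(s,t)]⁺ is MGF-bounded with
    -- ρ = ρA + ρU and σ = σA + σU
    ∀ s t, s ≤ t →
      ∫⁻ ω, ENNReal.ofReal (Real.exp (-θ * max (U s t ω - (A t ω - A s ω)) 0)) ∂P
        ≤ ENNReal.ofReal (Real.exp (θ * (ρA + ρU) * ((t : ℝ) - (s : ℝ))
            + θ * (σA + σU))) := by
  have hleftover := leftover_independent_general hθ.le (A := fun s t ω => A t ω - A s ω)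
    (fun s t _ => ((hAmeas t).sub (hAmeas s)).aemeasurable) (fun s t _ => (hUmeas s t).aemeasurable)
    hAbound hUbound fun s t _ => indepFun_sub_of_indep_iSup_comap hIndep t s (s, t)
  intro s t hst
  convert hleftover s t hst using 3
  simp only [Pi.add_apply]
  ring
end

section
/- (Leftover service, dependent case.) Let θ > 0 and let p, q > 1 with 1/p + 1/q = 1. Let A be a flow and U a service process on a common probability space (not assumed independent), with A MGF-bounded for pθ with bounding functions (ρ_A, σ_A) and U MGF-bounded for qθ with bounding functions (ρ_U, σ_U). Then the leftover service process U_l(s,t) := max(U(s,t) − A(s,t), 0) is MGF-bounded for θ with bounding functions ρ(θ) = ρ_A(pθ) + ρ_U(qθ) and σ(θ) = σ_A(pθ) + σ_U(qθ). -/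
open MeasureTheory ProbabilityTheory

/-!
Since `-[U - A]⁺ ≤ A - U`, it is enough to bound an exponential moment of a sum of two dependent
random variables. Hölder's inequality does this without independence, at the price of evaluating
the two moments at `pθ` and `qθ`; the roots `1/p` and `1/q` then cancel the factors `p` and `q` in
the exponents of the assumed bounds.
-/

section ExponentialMoments

variable {Ω : Type*} [MeasurableSpace Ω] {μ : Measure Ω} {X Y : Ω → ℝ} {p q a b : ℝ}

lemma ofReal_exp_rpow (x r : ℝ) :
    ENNReal.ofReal (Real.exp x) ^ r = ENNReal.ofReal (Real.exp (r * x)) := by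
  rw [ENNReal.ofReal_rpow_of_pos (Real.exp_pos x), ← Real.exp_mul, mul_comm]

lemma ofReal_exp_add (x y : ℝ) :
    ENNReal.ofReal (Real.exp (x + y)) =
      ENNReal.ofReal (Real.exp x) * ENNReal.ofReal (Real.exp y) := by
  rw [Real.exp_add, ENNReal.ofReal_mul (Real.exp_pos x).le]

lemma lintegral_exp_add_le_mul_rpow (hpq : p.HolderConjugate q)
    (hX : AEMeasurable X μ) (hY : AEMeasurable Y μ) :
    ∫⁻ ω, ENNReal.ofReal (Real.exp (X ω + Y ω)) ∂μ ≤
      (∫⁻ ω, ENNReal.ofReal (Real.exp (p * X ω)) ∂μ) ^ (1 / p) *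
        (∫⁻ ω, ENNReal.ofReal (Real.exp (q * Y ω)) ∂μ) ^ (1 / q) := by
  simpa only [ofReal_exp_add, ofReal_exp_rpow, Pi.mul_apply] using
    ENNReal.lintegral_mul_le_Lp_mul_Lq μ hpq hX.exp.ennreal_ofReal hY.exp.ennreal_ofReal

lemma lintegral_exp_add_le_exp_add (hpq : p.HolderConjugate q)
    (hX : AEMeasurable X μ) (hY : AEMeasurable Y μ)
    (hXa : ∫⁻ ω, ENNReal.ofReal (Real.exp (p * X ω)) ∂μ ≤ ENNReal.ofReal (Real.exp (p * a)))
    (hYb : ∫⁻ ω, ENNReal.ofReal (Real.exp (q * Y ω)) ∂μ ≤ ENNReal.ofReal (Real.exp (q * b))) :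
    ∫⁻ ω, ENNReal.ofReal (Real.exp (X ω + Y ω)) ∂μ ≤ ENNReal.ofReal (Real.exp (a + b)) := by
  have hp : 0 < p := hpq.pos
  have hq : 0 < q := hpq.symm.pos
  calc
    ∫⁻ ω, ENNReal.ofReal (Real.exp (X ω + Y ω)) ∂μ
    _ ≤ (∫⁻ ω, ENNReal.ofReal (Real.exp (p * X ω)) ∂μ) ^ (1 / p) *
          (∫⁻ ω, ENNReal.ofReal (Real.exp (q * Y ω)) ∂μ) ^ (1 / q) :=
      lintegral_exp_add_le_mul_rpow hpq hX hY
    _ ≤ ENNReal.ofReal (Real.exp (p * a)) ^ (1 / p) *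
          ENNReal.ofReal (Real.exp (q * b)) ^ (1 / q) := by gcongr
    _ = ENNReal.ofReal (Real.exp (a + b)) := by
      rw [ofReal_exp_rpow, ofReal_exp_rpow, ofReal_exp_add, one_div, one_div,
        inv_mul_cancel_left₀ hp.ne', inv_mul_cancel_left₀ hq.ne']

end ExponentialMoments

section LeftoverService

variable {Ω T : Type*} [MeasurableSpace Ω] [Preorder T]

/-- The flow with increments `A s t` is MGF-bounded for `θ`, where `ρ` and `σ` are the values of the
bounding functions at `θ`. Elapsed time is measured by `clock`, the cast `ℕ → ℝ` in discrete time
and the identity in continuous time. -/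
def IsFlowMGFBounded (clock : T → ℝ) (μ : Measure Ω) (A : T → T → Ω → ℝ) (θ ρ σ : ℝ) : Prop :=
  ∀ s t, s ≤ t →
    ∫⁻ ω, ENNReal.ofReal (Real.exp (θ * A s t ω)) ∂μ ≤
      ENNReal.ofReal (Real.exp (θ * ρ * (clock t - clock s) + θ * σ))

/-- The service process `U` is MGF-bounded for `θ`, with `clock`, `ρ` and `σ` as in
`IsFlowMGFBounded`. A service guarantee bounds `U` from below, hence the moment at `-θ`. -/
def IsServiceMGFBounded (clock : T → ℝ) (μ : Measure Ω) (U : T → T → Ω → ℝ) (θ ρ σ : ℝ) : Prop :=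
  ∀ s t, s ≤ t →
    ∫⁻ ω, ENNReal.ofReal (Real.exp (-θ * U s t ω)) ∂μ ≤
      ENNReal.ofReal (Real.exp (θ * ρ * (clock t - clock s) + θ * σ))

lemma neg_mul_max_sub_zero_le {θ : ℝ} (hθ : 0 ≤ θ) (u a : ℝ) :
    -θ * max (u - a) 0 ≤ θ * a + -θ * u := by
  linarith [mul_le_mul_of_nonneg_left (le_max_left (u - a) 0) hθ]

theorem leftover_dependent_general {clock : T → ℝ} {μ : Measure Ω} {A U : T → T → Ω → ℝ}
    {θ p q ρA σA ρU σU : ℝ} (hθ : 0 ≤ θ) (hpq : p.HolderConjugate q)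
    (hAmeas : ∀ s t, s ≤ t → AEMeasurable (A s t) μ)
    (hUmeas : ∀ s t, s ≤ t → AEMeasurable (U s t) μ)
    (hA : IsFlowMGFBounded clock μ A (p * θ) ρA σA)
    (hU : IsServiceMGFBounded clock μ U (q * θ) ρU σU) :
    IsServiceMGFBounded clock μ (fun s t ω ↦ max (U s t ω - A s t ω) 0) θ
      (ρA + ρU) (σA + σU) := by
  intro s t hst
  calc
    ∫⁻ ω, ENNReal.ofReal (Real.exp (-θ * max (U s t ω - A s t ω) 0)) ∂μ
    _ ≤ ∫⁻ ω, ENNReal.ofReal (Real.exp (θ * A s t ω + -θ * U s t ω)) ∂μ := by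
      gcongr with ω
      exact neg_mul_max_sub_zero_le hθ (U s t ω) (A s t ω)
    _ ≤ ENNReal.ofReal (Real.exp ((θ * ρA * (clock t - clock s) + θ * σA) +
          (θ * ρU * (clock t - clock s) + θ * σU))) := by
      refine lintegral_exp_add_le_exp_add hpq ((hAmeas s t hst).const_mul θ)
        ((hUmeas s t hst).const_mul (-θ)) ?_ ?_
      · simpa only [mul_add, mul_assoc] using hA s t hst
      · simpa only [mul_add, mul_assoc, neg_mul, mul_neg] using hU s t hst
    _ = ENNReal.ofReal (Real.exp (θ * (ρA + ρU) * (clock t - clock s) + θ * (σA + σU))) := by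
      ring_nf

end LeftoverService

/-- Leftover service, dependent case: with Hölder parameters `p, q`,
if `A` is MGF-bounded for `pθ` with values `(ρA, σA) = (ρ_A(pθ), σ_A(pθ))` and
`U` is MGF-bounded for `qθ` with values `(ρU, σU) = (ρ_U(qθ), σ_U(qθ))`, then the leftover
service `U_l(s,t) = [U(s,t) − A(s,t)]⁺` is MGF-bounded for `θ` with `ρ = ρA + ρU`,
`σ = σA + σU`. -/
theorem leftover_dependent
    {Ω : Type*} [MeasurableSpace Ω] (P : Measure Ω) [IsProbabilityMeasure P]
    (θ : ℝ) (hθ : 0 < θ)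
    (p q : ℝ) (hp : 1 < p) (hq : 1 < q) (hpq : 1 / p + 1 / q = 1)
    (A : ℕ → Ω → ℝ) (U : ℕ → ℕ → Ω → ℝ)
    (ρA σA ρU σU : ℝ)
    -- A is a flow
    (hAmeas : ∀ t, Measurable (A t))
    (hAmono : ∀ ω, Monotone fun t => A t ω)
    (hAzero : ∀ ω, A 0 ω = 0)
    -- U is a service process
    (hUmeas : ∀ s t, Measurable (U s t))
    (hUnonneg : ∀ s t, s ≤ t → ∀ ω, 0 ≤ U s t ω)
    -- A is MGF-bounded for pθ, U is MGF-bounded for qθ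
    (hAbound : ∀ s t, s ≤ t →
      ∫⁻ ω, ENNReal.ofReal (Real.exp (p * θ * (A t ω - A s ω))) ∂P
        ≤ ENNReal.ofReal (Real.exp (p * θ * ρA * ((t : ℝ) - (s : ℝ)) + p * θ * σA)))
    (hUbound : ∀ s t, s ≤ t →
      ∫⁻ ω, ENNReal.ofReal (Real.exp (-(q * θ) * U s t ω)) ∂P
        ≤ ENNReal.ofReal (Real.exp (q * θ * ρU * ((t : ℝ) - (s : ℝ)) + q * θ * σU))) :
    ∀ s t, s ≤ t →
      ∫⁻ ω, ENNReal.ofReal (Real.exp (-θ * max (U s t ω - (A t ω - A s ω)) 0)) ∂P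
        ≤ ENNReal.ofReal (Real.exp (θ * (ρA + ρU) * ((t : ℝ) - (s : ℝ))
            + θ * (σA + σU))) :=
  leftover_dependent_general hθ.le (Real.holderConjugate_iff.mpr ⟨hp, by simpa using hpq⟩)
    (fun s t _ ↦ ((hAmeas t).sub (hAmeas s)).aemeasurable)
    (fun s t _ ↦ (hUmeas s t).aemeasurable) hAbound hUbound
end

section
/- (End-to-end delay bound for two servers.) Let θ > 0. Let A be a flow and U, V service processes on a common probability space, with A, U, V mutually stochastically independent, A MGF-bounded for θ with bounding functions (ρ_A, σ_A), U MGF-bounded for θ with (ρ_U, σ_U), and V MGF-bounded for θ with (ρ_V, σ_V). Let B be the output of a dynamic U-server with input A, and let C be the output of a dynamic V-server with input B; define the end-to-end virtual delay d(t) := min{ s ≥ 0 : A(t) ≤ C(t + s) }. Under the stability condition ρ_A(θ) < min(−ρ_U(θ), −ρ_V(θ)), for all t ≥ 0 and integer T ≥ 0: P(d(t) > T) ≤ e^{−θρ_A(θ)T} · e^{θ(σ_A(θ)+σ_U(θ)+σ_V(θ))} / ((1 − e^{θ(ρ_U(θ)+ρ_A(θ))})(1 − e^{θ(ρ_V(θ)+ρ_A(θ))})).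 -/
/-!
If the delay at `t` exceeds `T`, then `C (t + T) < A t`. The minima in the two server inequalities
are attained, so unfolding them yields `r ≤ s ≤ t + T` with
`U r s + V s (t + T) < A t - A r`; nonnegativity of `U`, `V` and monotonicity of `A` force `r ≤ t`.
For a fixed pair `(r, s)`, Markov's inequality for `exp (θ (A t - A r - U r s - V s (t + T)))` and
independence bound the probability of this event by the product of the three moment bounds.

In the coordinates `u = s - r`, `v = t + T - s` one has `t - r = u + v - T`, so this product is the
constant `exp (-θ ρA T) exp (θ (σA + σU + σV))` times
`exp (θ (ρU + ρA)) ^ u * exp (θ (ρV + ρA)) ^ v`. Distinct pairs `(r, s)` have distinct coordinates,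
so the union bound is dominated by a product of two geometric series, which converge by the
stability condition.
-/

open MeasureTheory ProbabilityTheory

/-- The lower half of the defining property of a dynamic `u`-server with input `a` and output `b`,
for a single sample path. -/
def DynamicServerBound (u : ℕ → ℕ → ℝ) (a b : ℕ → ℝ) : Prop :=
  ∀ t, sInf ((fun s => a s + u s t) '' Set.Icc 0 t) ≤ b t

/-- The common form of the two MGF bounds: with `(c, α, β) = (θ, θ ρ, θ σ)` it bounds the increments
of an arrival flow, and with `(c, α, β) = (-θ, θ ρ, θ σ)` a service process. The expectation is a
lower Lebesgue integral, so that the bound includes integrability. -/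
def MGFBounded {Ω : Type*} [MeasurableSpace Ω] (P : Measure Ω) (c α β : ℝ)
    (X : ℕ → ℕ → Ω → ℝ) : Prop :=
  ∀ s t, s ≤ t → ∫⁻ ω, ENNReal.ofReal (Real.exp (c * X s t ω)) ∂P
    ≤ ENNReal.ofReal (Real.exp (α * ((t : ℝ) - (s : ℝ)) + β))

/-- The pairs `r ≤ s ≤ n` with `r ≤ t`: the times at which the minima of the two server inequalities
can be attained when data that arrived by time `t` is still in the system at time `n`. -/
def backlogPaths (t n : ℕ) : Finset (ℕ × ℕ) :=
  {p ∈ Finset.Iic t ×ˢ Finset.Iic n | p.1 ≤ p.2}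

lemma mem_backlogPaths {t n r s : ℕ} : (r, s) ∈ backlogPaths t n ↔ r ≤ t ∧ r ≤ s ∧ s ≤ n := by
  simp only [backlogPaths, Finset.mem_filter, Finset.mem_product, Finset.mem_Iic]
  tauto

section SamplePath

variable {u v : ℕ → ℕ → ℝ} {a b c : ℕ → ℝ} {t n : ℕ}

lemma DynamicServerBound.exists_add_le (h : DynamicServerBound u a b) (t : ℕ) :
    ∃ s ≤ t, a s + u s t ≤ b t := by
  have hne : (Set.Icc 0 t).Nonempty := ⟨0, by simp⟩
  obtain ⟨s, hs, hmin⟩ :=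
    (hne.image fun s => a s + u s t).csInf_mem ((Set.finite_Icc 0 t).image _)
  exact ⟨s, hs.2, hmin.trans_le (h t)⟩

lemma exists_backlogPath_of_lt (hu : DynamicServerBound u a b) (hv : DynamicServerBound v b c)
    (ha : Monotone a) (hu₀ : ∀ s t, s ≤ t → 0 ≤ u s t) (hv₀ : ∀ s t, s ≤ t → 0 ≤ v s t)
    (hlt : c n < a t) :
    ∃ p ∈ backlogPaths t n, u p.1 p.2 + v p.2 n < a t - a p.1 := by
  obtain ⟨s, hsn, hbs⟩ := hv.exists_add_le n
  obtain ⟨r, hrs, har⟩ := hu.exists_add_le s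
  have hpath : u r s + v s n < a t - a r := by linarith
  have hrt : r ≤ t := by
    by_contra! htr
    linarith [ha htr.le, hu₀ r s hrs, hv₀ s n hsn]
  exact ⟨(r, s), mem_backlogPaths.2 ⟨hrt, hrs, hsn⟩, hpath⟩

lemma setOf_lt_delay_subset_biUnion {Ω : Type*} {A B C : ℕ → Ω → ℝ} {U V : ℕ → ℕ → Ω → ℝ}
    (hA : ∀ ω, Monotone fun t => A t ω) (hU : ∀ s t, s ≤ t → ∀ ω, 0 ≤ U s t ω)
    (hV : ∀ s t, s ≤ t → ∀ ω, 0 ≤ V s t ω)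
    (hServerU : ∀ ω, DynamicServerBound (U · · ω) (A · ω) (B · ω))
    (hServerV : ∀ ω, DynamicServerBound (V · · ω) (B · ω) (C · ω)) (t T : ℕ) :
    {ω | ∀ s : ℕ, A t ω ≤ C (t + s) ω → T < s} ⊆ ⋃ p ∈ backlogPaths t (t + T),
      {ω | U p.1 p.2 ω + V p.2 (t + T) ω < A t ω - A p.1 ω} := by
  intro ω hω
  have hlt : C (t + T) ω < A t ω := lt_of_not_ge fun hle => lt_irrefl T (hω T hle)
  obtain ⟨p, hp, hpath⟩ := exists_backlogPath_of_lt (hServerU ω) (hServerV ω) (hA ω)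
    (hU · · · ω) (hV · · · ω) hlt
  exact Set.mem_biUnion hp hpath

end SamplePath

section GeometricSeries

variable {x y : ℝ}

lemma sum_pow_mul_pow_le (hx : 0 ≤ x) (hx₁ : x < 1) (hy : 0 ≤ y) (hy₁ : y < 1)
    (S : Finset (ℕ × ℕ)) :
    ∑ q ∈ S, x ^ q.1 * y ^ q.2 ≤ (1 - x)⁻¹ * (1 - y)⁻¹ := by
  have hxs := hasSum_geometric_of_lt_one hx hx₁
  have hys := hasSum_geometric_of_lt_one hy hy₁
  have hsummable : Summable fun q : ℕ × ℕ => x ^ q.1 * y ^ q.2 :=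
    hxs.summable.mul_of_nonneg hys.summable (fun _ => by positivity) (fun _ => by positivity)
  exact sum_le_hasSum S (fun _ _ => by positivity) (hxs.mul hys hsummable)

lemma sum_backlogPaths_pow_mul_pow_le (hx : 0 ≤ x) (hx₁ : x < 1) (hy : 0 ≤ y) (hy₁ : y < 1)
    (t n : ℕ) :
    ∑ p ∈ backlogPaths t n, x ^ (p.2 - p.1) * y ^ (n - p.2) ≤ (1 - x)⁻¹ * (1 - y)⁻¹ := by
  have hinj : Set.InjOn (fun p : ℕ × ℕ => (p.2 - p.1, n - p.2)) (backlogPaths t n) := by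
    rintro ⟨r, s⟩ hp ⟨r', s'⟩ hp' heq
    rw [Finset.mem_coe, mem_backlogPaths] at hp hp'
    simp only [Prod.mk.injEq] at heq ⊢
    omega
  calc ∑ p ∈ backlogPaths t n, x ^ (p.2 - p.1) * y ^ (n - p.2)
      = ∑ q ∈ (backlogPaths t n).image fun p => (p.2 - p.1, n - p.2), x ^ q.1 * y ^ q.2 :=
        (Finset.sum_image (f := fun q => x ^ q.1 * y ^ q.2) hinj).symm
    _ ≤ (1 - x)⁻¹ * (1 - y)⁻¹ := sum_pow_mul_pow_le hx hx₁ hy hy₁ _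

end GeometricSeries

lemma exp_path_exponent_eq (θ ρA σA ρU σU ρV σV : ℝ) {t T r s : ℕ} (hrs : r ≤ s)
    (hs : s ≤ t + T) :
    Real.exp ((θ * ρA * ((t : ℝ) - (r : ℝ)) + θ * σA) + (θ * ρU * ((s : ℝ) - (r : ℝ)) + θ * σU)
        + (θ * ρV * (((t + T : ℕ) : ℝ) - (s : ℝ)) + θ * σV))
      = Real.exp (-(θ * ρA) * (T : ℝ)) * Real.exp (θ * (σA + σU + σV))
        * (Real.exp (θ * (ρU + ρA)) ^ (s - r) * Real.exp (θ * (ρV + ρA)) ^ (t + T - s)) := by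
  simp only [← Real.exp_nat_mul, ← Real.exp_add, Nat.cast_sub hrs, Nat.cast_sub hs, Nat.cast_add]
  ring_nf

section Probability

variable {Ω : Type*} [MeasurableSpace Ω] {P : Measure Ω}

lemma iIndepFun_of_iIndep {ι β : Type*} [MeasurableSpace β] {m : ι → MeasurableSpace Ω}
    (hind : iIndep m P) {X : ι → Ω → β} (hX : ∀ i, Measurable[m i] (X i)) : iIndepFun X P :=
  iIndepFun_iff_iIndep _ _ _ |>.2 (iIndep_of_iIndep_of_le hind fun i => (hX i).comap_le)

lemma measure_sum_nonneg_le_prod_lintegral_exp {ι : Type*} [Fintype ι] {X : ι → Ω → ℝ}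
    (hind : iIndepFun X P) (hX : ∀ i, Measurable (X i)) :
    P {ω | 0 ≤ ∑ i, X i ω} ≤ ∏ i, ∫⁻ ω, ENNReal.ofReal (Real.exp (X i ω)) ∂P := by
  have hexp : Measurable fun x : ℝ => ENNReal.ofReal (Real.exp x) := by fun_prop
  have hprod (ω : Ω) : ∏ i, ENNReal.ofReal (Real.exp (X i ω))
      = ENNReal.ofReal (Real.exp (∑ i, X i ω)) := by
    rw [Real.exp_sum, ENNReal.ofReal_prod_of_nonneg fun _ _ => Real.exp_nonneg _]
  calc P {ω | 0 ≤ ∑ i, X i ω}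
      ≤ ∫⁻ ω, ∏ i, ENNReal.ofReal (Real.exp (X i ω)) ∂P := by
        refine meas_le_lintegral₀ (by fun_prop) fun ω hω => ?_
        rw [hprod, ENNReal.one_le_ofReal]
        exact Real.one_le_exp hω
    _ = ∏ i, ∫⁻ ω, ENNReal.ofReal (Real.exp (X i ω)) ∂P :=
        lintegral_prod_eq_prod_lintegral_of_indepFun _ _
          (hind.comp (fun _ x => ENNReal.ofReal (Real.exp x)) fun _ => hexp)
          fun i => hexp.comp (hX i)

lemma measure_add_lt_le_of_iIndepFun {X Y Z : Ω → ℝ} (hind : iIndepFun ![X, Y, Z] P)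
    (hX : Measurable X) (hY : Measurable Y) (hZ : Measurable Z) {θ a b c : ℝ} (hθ : 0 ≤ θ)
    (ha : ∫⁻ ω, ENNReal.ofReal (Real.exp (θ * X ω)) ∂P ≤ ENNReal.ofReal (Real.exp a))
    (hb : ∫⁻ ω, ENNReal.ofReal (Real.exp (-θ * Y ω)) ∂P ≤ ENNReal.ofReal (Real.exp b))
    (hc : ∫⁻ ω, ENNReal.ofReal (Real.exp (-θ * Z ω)) ∂P ≤ ENNReal.ofReal (Real.exp c)) :
    P {ω | Y ω + Z ω < X ω} ≤ ENNReal.ofReal (Real.exp (a + b + c)) := by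
  let W : Fin 3 → Ω → ℝ := fun i ω => ![θ, -θ, -θ] i * ![X, Y, Z] i ω
  have hWind : iIndepFun W P :=
    hind.comp (fun i x => ![θ, -θ, -θ] i * x) fun i => measurable_const_mul _
  have hW (i : Fin 3) : Measurable (W i) := by
    have : Measurable (![X, Y, Z] i) := by fin_cases i <;> assumption
    exact this.const_mul _
  calc P {ω | Y ω + Z ω < X ω}
      ≤ P {ω | 0 ≤ ∑ i, W i ω} := by
        refine measure_mono fun ω (hω : Y ω + Z ω < X ω) => ?_
        have hsum : ∑ i, W i ω = θ * (X ω - (Y ω + Z ω)) := by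
          simp only [W, Fin.sum_univ_three, Matrix.cons_val]
          ring
        exact (mul_nonneg hθ (sub_nonneg.2 hω.le)).trans_eq hsum.symm
    _ ≤ ∏ i, ∫⁻ ω, ENNReal.ofReal (Real.exp (W i ω)) ∂P :=
        measure_sum_nonneg_le_prod_lintegral_exp hWind hW
    _ ≤ ENNReal.ofReal (Real.exp a) * ENNReal.ofReal (Real.exp b)
          * ENNReal.ofReal (Real.exp c) := by
        rw [Fin.prod_univ_three]
        exact mul_le_mul' (mul_le_mul' ha hb) hc
    _ = ENNReal.ofReal (Real.exp (a + b + c)) := by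
        simp only [Real.exp_add, ENNReal.ofReal_mul, Real.exp_nonneg, mul_nonneg]

variable {A B C : ℕ → Ω → ℝ} {U V : ℕ → ℕ → Ω → ℝ}

lemma iIndepFun_path (hind : iIndep
      ![⨆ t, MeasurableSpace.comap (A t) inferInstance,
        ⨆ p : ℕ × ℕ, MeasurableSpace.comap (U p.1 p.2) inferInstance,
        ⨆ p : ℕ × ℕ, MeasurableSpace.comap (V p.1 p.2) inferInstance] P) (t r s n : ℕ) :
    iIndepFun ![fun ω => A t ω - A r ω, U r s, V s n] P := by
  refine iIndepFun_of_iIndep hind fun i => ?_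
  fin_cases i
  · exact (measurable_iSup_comap A t).sub (measurable_iSup_comap A r)
  · exact measurable_iSup_comap (fun p : ℕ × ℕ => U p.1 p.2) (r, s)
  · exact measurable_iSup_comap (fun p : ℕ × ℕ => V p.1 p.2) (s, n)

lemma measure_path_le {θ : ℝ} (hθ : 0 ≤ θ) {ρA σA ρU σU ρV σV : ℝ}
    (hAmeas : ∀ t, Measurable (A t)) (hUmeas : ∀ s t, Measurable (U s t))
    (hVmeas : ∀ s t, Measurable (V s t))
    (hAbound : MGFBounded P θ (θ * ρA) (θ * σA) fun s t ω => A t ω - A s ω)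
    (hUbound : MGFBounded P (-θ) (θ * ρU) (θ * σU) U)
    (hVbound : MGFBounded P (-θ) (θ * ρV) (θ * σV) V)
    {t T r s : ℕ} (hp : (r, s) ∈ backlogPaths t (t + T))
    (hind : iIndepFun ![fun ω => A t ω - A r ω, U r s, V s (t + T)] P) :
    P {ω | U r s ω + V s (t + T) ω < A t ω - A r ω}
      ≤ ENNReal.ofReal (Real.exp (-(θ * ρA) * (T : ℝ)) * Real.exp (θ * (σA + σU + σV))
        * (Real.exp (θ * (ρU + ρA)) ^ (s - r) * Real.exp (θ * (ρV + ρA)) ^ (t + T - s))) := by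
  obtain ⟨hrt, hrs, hs⟩ := mem_backlogPaths.1 hp
  rw [← exp_path_exponent_eq θ ρA σA ρU σU ρV σV hrs hs]
  exact measure_add_lt_le_of_iIndepFun hind ((hAmeas t).sub (hAmeas r)) (hUmeas r s)
    (hVmeas s (t + T)) hθ (hAbound r t hrt) (hUbound r s hrs) (hVbound s (t + T) hs)

theorem end_to_end_delay_two_servers_general {θ : ℝ} (hθ : 0 < θ) {ρA σA ρU σU ρV σV : ℝ}
    (hAmeas : ∀ t, Measurable (A t)) (hAmono : ∀ ω, Monotone fun t => A t ω)
    (hUmeas : ∀ s t, Measurable (U s t)) (hUnonneg : ∀ s t, s ≤ t → ∀ ω, 0 ≤ U s t ω)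
    (hVmeas : ∀ s t, Measurable (V s t)) (hVnonneg : ∀ s t, s ≤ t → ∀ ω, 0 ≤ V s t ω)
    (hAbound : MGFBounded P θ (θ * ρA) (θ * σA) fun s t ω => A t ω - A s ω)
    (hUbound : MGFBounded P (-θ) (θ * ρU) (θ * σU) U)
    (hVbound : MGFBounded P (-θ) (θ * ρV) (θ * σV) V)
    (hIndep : iIndep
      ![⨆ t, MeasurableSpace.comap (A t) inferInstance,
        ⨆ p : ℕ × ℕ, MeasurableSpace.comap (U p.1 p.2) inferInstance,
        ⨆ p : ℕ × ℕ, MeasurableSpace.comap (V p.1 p.2) inferInstance] P)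
    (hServerU : ∀ ω, DynamicServerBound (U · · ω) (A · ω) (B · ω))
    (hServerV : ∀ ω, DynamicServerBound (V · · ω) (B · ω) (C · ω))
    (hstab : ρA < min (-ρU) (-ρV)) (t T : ℕ) :
    P {ω | ∀ s : ℕ, A t ω ≤ C (t + s) ω → T < s}
      ≤ ENNReal.ofReal (Real.exp (-(θ * ρA) * (T : ℝ))
          * Real.exp (θ * (σA + σU + σV))
          / ((1 - Real.exp (θ * (ρU + ρA))) * (1 - Real.exp (θ * (ρV + ρA))))) := by
  obtain ⟨hstabU, hstabV⟩ := lt_min_iff.1 hstab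
  set K := Real.exp (-(θ * ρA) * (T : ℝ)) * Real.exp (θ * (σA + σU + σV))
  set x := Real.exp (θ * (ρU + ρA))
  set y := Real.exp (θ * (ρV + ρA))
  have hx : x < 1 := Real.exp_lt_one_iff.2 (mul_neg_of_pos_of_neg hθ (by linarith))
  have hy : y < 1 := Real.exp_lt_one_iff.2 (mul_neg_of_pos_of_neg hθ (by linarith))
  have hpath : ∀ p ∈ backlogPaths t (t + T),
      P {ω | U p.1 p.2 ω + V p.2 (t + T) ω < A t ω - A p.1 ω}
        ≤ ENNReal.ofReal (K * (x ^ (p.2 - p.1) * y ^ (t + T - p.2))) := by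
    rintro ⟨r, s⟩ hp
    exact measure_path_le hθ.le hAmeas hUmeas hVmeas hAbound hUbound hVbound hp
      (iIndepFun_path hIndep t r s (t + T))
  calc P {ω | ∀ s : ℕ, A t ω ≤ C (t + s) ω → T < s}
      ≤ ∑ p ∈ backlogPaths t (t + T), P {ω | U p.1 p.2 ω + V p.2 (t + T) ω < A t ω - A p.1 ω} :=
        (measure_mono (setOf_lt_delay_subset_biUnion hAmono hUnonneg hVnonneg hServerU hServerV
          t T)).trans (measure_biUnion_finset_le _ _)
    _ ≤ ∑ p ∈ backlogPaths t (t + T), ENNReal.ofReal (K * (x ^ (p.2 - p.1) * y ^ (t + T - p.2))) :=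
        Finset.sum_le_sum hpath
    _ = ENNReal.ofReal (K * ∑ p ∈ backlogPaths t (t + T), x ^ (p.2 - p.1) * y ^ (t + T - p.2)) := by
        rw [Finset.mul_sum, ENNReal.ofReal_sum_of_nonneg fun _ _ => by positivity]
    _ ≤ ENNReal.ofReal (K / ((1 - x) * (1 - y))) := by
        rw [div_eq_mul_inv, mul_inv]
        gcongr
        exact sum_backlogPaths_pow_mul_pow_le (Real.exp_nonneg _) hx (Real.exp_nonneg _) hy _ _

end Probability

/-- End-to-end delay bound for a tandem of two dynamic servers.
The end-to-end virtual delay `d(t) = min { s ≥ 0 | A(t) ≤ C(t+s) }` exceeds `T` exactly on the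
event `{ω | every s with A(t) ≤ C(t+s) satisfies s > T}` (with `min ∅ = ∞`). -/
theorem end_to_end_delay_two_servers
    {Ω : Type*} [MeasurableSpace Ω] (P : Measure Ω) [IsProbabilityMeasure P]
    (θ : ℝ) (hθ : 0 < θ)
    (A B C : ℕ → Ω → ℝ) (U V : ℕ → ℕ → Ω → ℝ)
    (ρA σA ρU σU ρV σV : ℝ)
    -- A is a flow
    (hAmeas : ∀ t, Measurable (A t))
    (hAmono : ∀ ω, Monotone fun t => A t ω)
    (hAzero : ∀ ω, A 0 ω = 0)
    -- U and V are service processes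
    (hUmeas : ∀ s t, Measurable (U s t))
    (hUnonneg : ∀ s t, s ≤ t → ∀ ω, 0 ≤ U s t ω)
    (hVmeas : ∀ s t, Measurable (V s t))
    (hVnonneg : ∀ s t, s ≤ t → ∀ ω, 0 ≤ V s t ω)
    -- MGF bounds
    (hAbound : ∀ s t, s ≤ t →
      ∫⁻ ω, ENNReal.ofReal (Real.exp (θ * (A t ω - A s ω))) ∂P
        ≤ ENNReal.ofReal (Real.exp (θ * ρA * ((t : ℝ) - (s : ℝ)) + θ * σA)))
    (hUbound : ∀ s t, s ≤ t →
      ∫⁻ ω, ENNReal.ofReal (Real.exp (-θ * U s t ω)) ∂P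
        ≤ ENNReal.ofReal (Real.exp (θ * ρU * ((t : ℝ) - (s : ℝ)) + θ * σU)))
    (hVbound : ∀ s t, s ≤ t →
      ∫⁻ ω, ENNReal.ofReal (Real.exp (-θ * V s t ω)) ∂P
        ≤ ENNReal.ofReal (Real.exp (θ * ρV * ((t : ℝ) - (s : ℝ)) + θ * σV)))
    -- A, U, V are mutually stochastically independent
    (hIndep : iIndep
      ![⨆ t, MeasurableSpace.comap (A t) inferInstance,
        ⨆ p : ℕ × ℕ, MeasurableSpace.comap (U p.1 p.2) inferInstance,
        ⨆ p : ℕ × ℕ, MeasurableSpace.comap (V p.1 p.2) inferInstance] P)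
    -- B is the output of a dynamic U-server with input A (and is a flow)
    (hBmeas : ∀ t, Measurable (B t))
    (hBmono : ∀ ω, Monotone fun t => B t ω)
    (hBzero : ∀ ω, B 0 ω = 0)
    (hServerU : ∀ t ω, sInf ((fun s => A s ω + U s t ω) '' Set.Icc 0 t) ≤ B t ω)
    (hBleA : ∀ t ω, B t ω ≤ A t ω)
    -- C is the output of a dynamic V-server with input B (and is a flow)
    (hCmeas : ∀ t, Measurable (C t))
    (hCmono : ∀ ω, Monotone fun t => C t ω)
    (hCzero : ∀ ω, C 0 ω = 0)
    (hServerV : ∀ t ω, sInf ((fun s => B s ω + V s t ω) '' Set.Icc 0 t) ≤ C t ω)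
    (hCleB : ∀ t ω, C t ω ≤ B t ω)
    -- stability condition
    (hstab : ρA < min (-ρU) (-ρV))
    (t : ℕ) (T : ℕ) :
    P {ω | ∀ s : ℕ, A t ω ≤ C (t + s) ω → T < s}
      ≤ ENNReal.ofReal (Real.exp (-(θ * ρA) * (T : ℝ))
          * Real.exp (θ * (σA + σU + σV))
          / ((1 - Real.exp (θ * (ρU + ρA))) * (1 - Real.exp (θ * (ρV + ρA))))) :=
  end_to_end_delay_two_servers_general hθ hAmeas hAmono hUmeas hUnonneg hVmeas hVnonneg hAbound
    hUbound hVbound hIndep (fun ω t => hServerU t ω) (fun ω t => hServerV t ω) hstab t T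
end

section
/- (Aggregate of stationary token-bucket-shaped flows.) Let θ > 0 and let A₁, …, A_n be flows on a common probability space such that (i) each Aᵢ is stationary, i.e., for every shift τ and all s ≤ t the increment Aᵢ(s+τ, t+τ) is equal in distribution to Aᵢ(s,t), and (ii) each Aᵢ is token-bucket shaped: Aᵢ(s,t) ≤ ρᵢ(t−s) + σᵢ almost surely for all s ≤ t, with constants ρᵢ ≥ 0 and σᵢ ≥ 0. Then the aggregate A := Σᵢ Aᵢ satisfies, for all s ≤ t: E[e^{θ A(s,t)}] ≤ e^{θ(Σᵢ ρᵢ)(t−s)} · ( (1/2) e^{θ Σᵢ σᵢ} + (1/2) e^{−θ Σᵢ σᵢ} ); in particular A is MGF-bounded for θ with bounding functions ρ(θ) = Σᵢ ρᵢ and σ(θ) = (1/θ)·log( (1/2) e^{θ Σᵢ σᵢ} + (1/2) e^{−θ Σᵢ σᵢ} ). -/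
/-!
Fix `s ≤ t`, put `d = t - s`, and let `zᵢ = Aᵢ(s,t) - ρᵢ d ≤ σᵢ` be the excess of the `i`-th flow.
Its lower bound `zᵢ ≥ -σᵢ` may fail, so `zᵢ` is replaced by `Dᵢ = max zᵢ (-σᵢ) ∈ [-σᵢ, σᵢ]`.
Truncation does not spoil `E Dᵢ ≤ 0`: over `K` consecutive windows of length `d` the truncated
excesses still add up to at most `σᵢ` pathwise, because a window where the truncation is active
contributes exactly `-σᵢ`, which cancels whatever was accumulated before it; by stationarity
`K * E Dᵢ ≤ σᵢ` for every `K`.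

Being a statement about expectations, this is additive over the flows, whatever their dependence:
`∑ Dᵢ` dominates `∑ zᵢ`, has nonpositive mean and lies in `[-S, S]` with `S = ∑ σᵢ`. Bounding `exp`
by its chord over `[-θ S, θ S]` gives `E exp (θ ∑ Dᵢ) ≤ cosh (θ S)`.
-/

open MeasureTheory ProbabilityTheory

lemma exists_sum_range_max_sub_le {G : Type*} [AddCommGroup G] [LinearOrder G]
    [IsOrderedAddMonoid G] {z : ℕ → G} {c : G} (hz : ∀ j k, j ≤ k → z k - z j ≤ c) (K : ℕ) :
    ∃ j ≤ K, ∑ k ∈ Finset.range K, max (z (k + 1) - z k) (-c) ≤ z K - z j := by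
  induction K with
  | zero => exact ⟨0, le_rfl, by simp⟩
  | succ K ih =>
    obtain ⟨j, hj, hsum⟩ := ih
    rw [Finset.sum_range_succ]
    rcases le_total (-c) (z (K + 1) - z K) with hstep | hstep
    · refine ⟨j, hj.trans K.le_succ, ?_⟩
      calc ∑ k ∈ Finset.range K, max (z (k + 1) - z k) (-c) + max (z (K + 1) - z K) (-c)
          ≤ (z K - z j) + (z (K + 1) - z K) := add_le_add hsum (max_eq_left hstep).le
        _ = z (K + 1) - z j := sub_add_sub_cancel' ..
    · -- The truncated step `-c` cancels the sum before it, so the comparison restarts at `K + 1`.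
      refine ⟨K + 1, le_rfl, ?_⟩
      rw [max_eq_right hstep, sub_self, ← sub_eq_add_neg, sub_nonpos]
      exact hsum.trans (hz j K hj)

lemma sum_range_max_sub_le {G : Type*} [AddCommGroup G] [LinearOrder G] [IsOrderedAddMonoid G]
    {z : ℕ → G} {c : G} (hz : ∀ j k, j ≤ k → z k - z j ≤ c) (K : ℕ) :
    ∑ k ∈ Finset.range K, max (z (k + 1) - z k) (-c) ≤ c :=
  let ⟨j, hj, hsum⟩ := exists_sum_range_max_sub_le hz K
  hsum.trans (hz j K hj)

lemma max_neg_mem_Icc {G : Type*} [AddCommGroup G] [LinearOrder G] [IsOrderedAddMonoid G]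
    {x c : G} (hc : 0 ≤ c) (hx : x ≤ c) : max x (-c) ∈ Set.Icc (-c) c :=
  ⟨le_max_right _ _, max_le hx (neg_le_self hc)⟩

section

variable {Ω : Type*} {mΩ : MeasurableSpace Ω} {P : Measure Ω}

lemma integral_max_sub_nonpos [IsFiniteMeasure P] {Z : ℕ → Ω → ℝ} {c : ℝ}
    (hident : ∀ k, IdentDistrib (fun ω ↦ Z (k + 1) ω - Z k ω) (fun ω ↦ Z 1 ω - Z 0 ω) P P)
    (hle : ∀ j k, j ≤ k → ∀ᵐ ω ∂P, Z k ω - Z j ω ≤ c) :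
    ∫ ω, max (Z 1 ω - Z 0 ω) (-c) ∂P ≤ 0 := by
  have hident_max (k : ℕ) : IdentDistrib (fun ω ↦ max (Z (k + 1) ω - Z k ω) (-c))
      (fun ω ↦ max (Z 1 ω - Z 0 ω) (-c)) P P :=
    (hident k).comp (measurable_id.max measurable_const)
  have hint (k : ℕ) : Integrable (fun ω ↦ max (Z (k + 1) ω - Z k ω) (-c)) P := by
    refine .of_mem_Icc (-c) c (hident_max k).aemeasurable_fst ?_
    filter_upwards [hle 0 0 le_rfl, hle k (k + 1) k.le_succ] with ω hω₀ hω
    exact max_neg_mem_Icc (by simpa using hω₀) hω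
  have hpath : ∀ᵐ ω ∂P, ∀ j k, j ≤ k → Z k ω - Z j ω ≤ c := by
    simpa only [ae_all_iff] using hle
  have hbound (K : ℕ) : K • ∫ ω, max (Z 1 ω - Z 0 ω) (-c) ∂P ≤ P.real Set.univ * c := by
    calc K • ∫ ω, max (Z 1 ω - Z 0 ω) (-c) ∂P
        = ∑ k ∈ Finset.range K, ∫ ω, max (Z (k + 1) ω - Z k ω) (-c) ∂P := by
          simp only [(hident_max _).integral_eq, Finset.sum_const, Finset.card_range]
      _ = ∫ ω, ∑ k ∈ Finset.range K, max (Z (k + 1) ω - Z k ω) (-c) ∂P :=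
          (integral_finsetSum _ fun k _ ↦ hint k).symm
      _ ≤ ∫ _, c ∂P :=
          integral_mono_ae (integrable_finsetSum _ fun k _ ↦ hint k) (integrable_const c)
            (hpath.mono fun ω hω ↦ sum_range_max_sub_le hω K)
      _ = P.real Set.univ * c := by rw [integral_const, smul_eq_mul]
  by_contra! hpos
  obtain ⟨K, hK⟩ := exists_lt_nsmul hpos (P.real Set.univ * c)
  exact (hbound K).not_gt hK

lemma mgf_le_cosh_of_mem_Icc [IsProbabilityMeasure P] {X : Ω → ℝ} {b θ : ℝ} (hθ : 0 ≤ θ)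
    (hX : AEMeasurable X P) (hXb : ∀ᵐ ω ∂P, X ω ∈ Set.Icc (-b) b) (hmean : ∫ ω, X ω ∂P ≤ 0) :
    mgf X P θ ≤ Real.cosh (θ * b) := by
  have hb : 0 ≤ b := by
    obtain ⟨ω, hω⟩ := hXb.exists
    exact neg_le_self_iff.mp (hω.1.trans hω.2)
  have hint : Integrable X P := .of_mem_Icc (-b) b hX hXb
  have hint_chord : Integrable (fun ω ↦ X ω / b * Real.sinh (θ * b)) P :=
    (hint.div_const b).mul_const _
  have hchord : ∀ᵐ ω ∂P,
      Real.exp (θ * X ω) ≤ Real.cosh (θ * b) + X ω / b * Real.sinh (θ * b) := by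
    filter_upwards [hXb] with ω hω
    have habs : |X ω / b| ≤ 1 := by
      rw [abs_div, abs_of_nonneg hb]
      exact div_le_one_of_le₀ (abs_le.mpr hω) hb
    have hscale : X ω / b * (θ * b) = θ * X ω := by
      have hzero : b = 0 → X ω = 0 := by rintro rfl; simpa using hω
      rw [mul_left_comm, div_mul_cancel_of_imp hzero]
    exact hscale ▸ Real.exp_mul_le_cosh_add_mul_sinh habs (θ * b)
  calc mgf X P θ
      ≤ ∫ ω, (Real.cosh (θ * b) + X ω / b * Real.sinh (θ * b)) ∂P :=
        integral_mono_ae (integrable_exp_mul_of_mem_Icc hX hXb)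
          ((integrable_const _).add hint_chord) hchord
    _ = Real.cosh (θ * b) + (∫ ω, X ω ∂P) / b * Real.sinh (θ * b) := by
        rw [integral_add (integrable_const _) hint_chord, integral_mul_const, integral_div]
        simp only [integral_const, probReal_univ, one_smul]
    _ ≤ Real.cosh (θ * b) :=
        add_le_of_nonpos_right <| mul_nonpos_of_nonpos_of_nonneg
          (div_nonpos_of_nonpos_of_nonneg hmean hb) (Real.sinh_nonneg_iff.mpr (by positivity))

lemma ae_sum_mem_Icc_neg {ι : Type*} {I : Finset ι} {X : ι → Ω → ℝ} {b : ι → ℝ}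
    (hX : ∀ i ∈ I, ∀ᵐ ω ∂P, X i ω ∈ Set.Icc (-b i) (b i)) :
    ∀ᵐ ω ∂P, ∑ i ∈ I, X i ω ∈ Set.Icc (-∑ i ∈ I, b i) (∑ i ∈ I, b i) := by
  filter_upwards [(ae_ball_iff I.countable_toSet).mpr hX] with ω hω
  rw [← Finset.sum_neg_distrib]
  exact ⟨Finset.sum_le_sum fun i hi ↦ (hω i hi).1, Finset.sum_le_sum fun i hi ↦ (hω i hi).2⟩

lemma mgf_sum_le_cosh_of_mem_Icc [IsProbabilityMeasure P] {ι : Type*} {I : Finset ι}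
    {X : ι → Ω → ℝ} {b : ι → ℝ} {θ : ℝ} (hθ : 0 ≤ θ) (hX : ∀ i ∈ I, AEMeasurable (X i) P)
    (hXb : ∀ i ∈ I, ∀ᵐ ω ∂P, X i ω ∈ Set.Icc (-b i) (b i))
    (hmean : ∀ i ∈ I, ∫ ω, X i ω ∂P ≤ 0) :
    mgf (fun ω ↦ ∑ i ∈ I, X i ω) P θ ≤ Real.cosh (θ * ∑ i ∈ I, b i) := by
  refine mgf_le_cosh_of_mem_Icc hθ (Finset.aemeasurable_fun_sum I hX) (ae_sum_mem_Icc_neg hXb) ?_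
  rw [integral_finsetSum I fun i hi ↦ .of_mem_Icc _ _ (hX i hi) (hXb i hi)]
  exact Finset.sum_nonpos hmean

/-- Stationarity in the sense of the marginal law of each single increment: `B(s + τ, t + τ)` has
the law of `B(s, t)`. Joint laws of several increments are not constrained. -/
def HasStationaryIncrements (B : ℕ → Ω → ℝ) (P : Measure Ω) : Prop :=
  ∀ τ s t : ℕ, s ≤ t →
    IdentDistrib (fun ω ↦ B (t + τ) ω - B (s + τ) ω) (fun ω ↦ B t ω - B s ω) P P

/-- Shaping by a token bucket of rate `ρ` and burst size `σ`; the exceptional null set may depend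
on the endpoints `s`, `t`. -/
def IsTokenBucketShaped (B : ℕ → Ω → ℝ) (ρ σ : ℝ) (P : Measure Ω) : Prop :=
  ∀ s t : ℕ, s ≤ t → ∀ᵐ ω ∂P, B t ω - B s ω ≤ ρ * ((t : ℝ) - (s : ℝ)) + σ

/-- The excess `B(s, t) - ρ (t - s)` of an increment over the token rate, truncated below at `-σ`
so that for a shaped process it lies in `[-σ, σ]`. -/
def truncatedExcess (B : ℕ → Ω → ℝ) (ρ σ : ℝ) (s t : ℕ) (ω : Ω) : ℝ :=
  max (B t ω - B s ω - ρ * ((t : ℝ) - (s : ℝ))) (-σ)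

variable {B : ℕ → Ω → ℝ} {ρ σ : ℝ} {s t : ℕ}

lemma sub_le_add_truncatedExcess (B : ℕ → Ω → ℝ) (ρ σ : ℝ) (s t : ℕ) (ω : Ω) :
    B t ω - B s ω ≤ ρ * ((t : ℝ) - (s : ℝ)) + truncatedExcess B ρ σ s t ω :=
  sub_le_iff_le_add'.mp (le_max_left _ _)

lemma exp_mul_sum_sub_le {ι : Type*} (I : Finset ι) (A : ι → ℕ → Ω → ℝ) (ρ σ : ι → ℝ) {θ : ℝ}
    (hθ : 0 ≤ θ) (s t : ℕ) (ω : Ω) :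
    Real.exp (θ * ∑ i ∈ I, (A i t ω - A i s ω)) ≤
      Real.exp (θ * (∑ i ∈ I, ρ i) * ((t : ℝ) - (s : ℝ))) *
        Real.exp (θ * ∑ i ∈ I, truncatedExcess (A i) (ρ i) (σ i) s t ω) := by
  rw [← Real.exp_add, mul_assoc, ← mul_add, Finset.sum_mul, ← Finset.sum_add_distrib]
  gcongr with i
  exact sub_le_add_truncatedExcess ..

lemma HasStationaryIncrements.aemeasurable_sub (hB : HasStationaryIncrements B P) (hst : s ≤ t) :
    AEMeasurable (fun ω ↦ B t ω - B s ω) P :=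
  (hB 0 s t hst).aemeasurable_snd

lemma HasStationaryIncrements.aemeasurable_truncatedExcess (hB : HasStationaryIncrements B P)
    (hst : s ≤ t) : AEMeasurable (truncatedExcess B ρ σ s t) P :=
  ((hB.aemeasurable_sub hst).sub_const _).max aemeasurable_const

lemma IsTokenBucketShaped.truncatedExcess_mem_Icc (hB : IsTokenBucketShaped B ρ σ P)
    (hst : s ≤ t) : ∀ᵐ ω ∂P, truncatedExcess B ρ σ s t ω ∈ Set.Icc (-σ) σ := by
  filter_upwards [hB 0 0 le_rfl, hB s t hst] with ω hω₀ hω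
  exact max_neg_mem_Icc (by simpa using hω₀) (sub_le_iff_le_add'.mpr hω)

lemma HasStationaryIncrements.integral_truncatedExcess_nonpos [IsFiniteMeasure P]
    (hstat : HasStationaryIncrements B P) (hshaped : IsTokenBucketShaped B ρ σ P) (hst : s ≤ t) :
    ∫ ω, truncatedExcess B ρ σ s t ω ∂P ≤ 0 := by
  obtain ⟨d, rfl⟩ := Nat.exists_eq_add_of_le hst
  let Z (k : ℕ) (ω : Ω) : ℝ := B (s + k * d) ω - ρ * (k * d)
  have hstep (k : ℕ) (ω : Ω) :
      Z (k + 1) ω - Z k ω = B (s + d + k * d) ω - B (s + k * d) ω - ρ * d := by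
    simp only [Z, show s + (k + 1) * d = s + d + k * d by ring, Nat.cast_succ]
    ring
  have hstep_zero (ω : Ω) : Z 1 ω - Z 0 ω = B (s + d) ω - B s ω - ρ * d := by
    simpa using hstep 0 ω
  have hident (k : ℕ) :
      IdentDistrib (fun ω ↦ Z (k + 1) ω - Z k ω) (fun ω ↦ Z 1 ω - Z 0 ω) P P := by
    simp_rw [hstep_zero, hstep]
    exact (hstat (k * d) s (s + d) hst).sub_const (ρ * d)
  have hle (j k : ℕ) (hjk : j ≤ k) : ∀ᵐ ω ∂P, Z k ω - Z j ω ≤ σ := by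
    filter_upwards [hshaped (s + j * d) (s + k * d) (by gcongr)] with ω hω
    push_cast at hω
    linarith
  simpa [truncatedExcess, hstep_zero] using integral_max_sub_nonpos hident hle

theorem stationary_token_bucket_aggregate_general [IsProbabilityMeasure P] {ι : Type*} [Fintype ι]
    {A : ι → ℕ → Ω → ℝ} {ρ σ : ι → ℝ} {θ : ℝ} (hθ : 0 ≤ θ)
    (hstat : ∀ i, HasStationaryIncrements (A i) P)
    (hshaped : ∀ i, IsTokenBucketShaped (A i) (ρ i) (σ i) P) (hst : s ≤ t) :
    ∫⁻ ω, ENNReal.ofReal (Real.exp (θ * ∑ i, (A i t ω - A i s ω))) ∂P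
      ≤ ENNReal.ofReal (Real.exp (θ * (∑ i, ρ i) * ((t : ℝ) - (s : ℝ)))
          * (1 / 2 * Real.exp (θ * ∑ i, σ i) + 1 / 2 * Real.exp (-(θ * ∑ i, σ i)))) := by
  let D (i : ι) : Ω → ℝ := truncatedExcess (A i) (ρ i) (σ i) s t
  let R : ℝ := Real.exp (θ * (∑ i, ρ i) * ((t : ℝ) - (s : ℝ)))
  have hmeas (i : ι) : AEMeasurable (D i) P := (hstat i).aemeasurable_truncatedExcess hst
  have hmem (i : ι) : ∀ᵐ ω ∂P, D i ω ∈ Set.Icc (-σ i) (σ i) :=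
    (hshaped i).truncatedExcess_mem_Icc hst
  have hmean (i : ι) : ∫ ω, D i ω ∂P ≤ 0 :=
    (hstat i).integral_truncatedExcess_nonpos (hshaped i) hst
  have hint : Integrable (fun ω ↦ Real.exp (θ * ∑ i, D i ω)) P :=
    integrable_exp_mul_of_mem_Icc (Finset.aemeasurable_fun_sum _ fun i _ ↦ hmeas i)
      (ae_sum_mem_Icc_neg fun i _ ↦ hmem i)
  calc ∫⁻ ω, ENNReal.ofReal (Real.exp (θ * ∑ i, (A i t ω - A i s ω))) ∂P
      ≤ ∫⁻ ω, ENNReal.ofReal (R * Real.exp (θ * ∑ i, D i ω)) ∂P :=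
        lintegral_mono fun ω ↦ ENNReal.ofReal_le_ofReal (exp_mul_sum_sub_le _ A ρ σ hθ s t ω)
    _ = ENNReal.ofReal (R * mgf (fun ω ↦ ∑ i, D i ω) P θ) := by
        rw [mgf, ← integral_const_mul, ofReal_integral_eq_lintegral_ofReal (hint.const_mul R)]
        exact .of_forall fun ω ↦ by positivity
    _ ≤ ENNReal.ofReal (R * Real.cosh (θ * ∑ i, σ i)) := by
        gcongr
        exact mgf_sum_le_cosh_of_mem_Icc hθ (fun i _ ↦ hmeas i) (fun i _ ↦ hmem i)
          fun i _ ↦ hmean i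
    _ = ENNReal.ofReal (R * (1 / 2 * Real.exp (θ * ∑ i, σ i)
          + 1 / 2 * Real.exp (-(θ * ∑ i, σ i)))) := by
        rw [Real.cosh_eq, add_div, div_eq_inv_mul, div_eq_inv_mul, one_div]

end

/-- Aggregate of `n` stationary token-bucket-shaped flows: if each `A i` is stationary and
satisfies `A i (s,t) ≤ ρ i (t−s) + σ i` almost surely, then the aggregate `Σ i, A i` is
MGF-bounded for `θ` with `ρ(θ) = Σ i, ρ i` and
`σ(θ) = (1/θ)·log((1/2)e^{θ Σ σ i} + (1/2)e^{−θ Σ σ i})`. -/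
theorem stationary_token_bucket_aggregate
    {Ω : Type*} [MeasurableSpace Ω] (P : Measure Ω) [IsProbabilityMeasure P]
    (θ : ℝ) (hθ : 0 < θ)
    (n : ℕ) (A : Fin n → ℕ → Ω → ℝ) (ρ σ : Fin n → ℝ)
    (hρ : ∀ i, 0 ≤ ρ i) (hσ : ∀ i, 0 ≤ σ i)
    -- each A i is a flow
    (hAmeas : ∀ i t, Measurable (A i t))
    (hAmono : ∀ i ω, Monotone fun t => A i t ω)
    (hAzero : ∀ i ω, A i 0 ω = 0)
    -- stationarity: increments are shift-invariant in distribution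
    (hstat : ∀ i, ∀ τ s t : ℕ, s ≤ t →
      IdentDistrib (fun ω => A i (t + τ) ω - A i (s + τ) ω)
        (fun ω => A i t ω - A i s ω) P P)
    -- token-bucket shaping
    (htb : ∀ i, ∀ s t : ℕ, s ≤ t →
      ∀ᵐ ω ∂P, A i t ω - A i s ω ≤ ρ i * ((t : ℝ) - (s : ℝ)) + σ i) :
    ∀ s t, s ≤ t →
      ∫⁻ ω, ENNReal.ofReal (Real.exp (θ * ∑ i, (A i t ω - A i s ω))) ∂P
        ≤ ENNReal.ofReal (Real.exp (θ * (∑ i, ρ i) * ((t : ℝ) - (s : ℝ)))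
            * (1 / 2 * Real.exp (θ * ∑ i, σ i)
              + 1 / 2 * Real.exp (-(θ * ∑ i, σ i)))) :=
  fun _ _ hst ↦ stationary_token_bucket_aggregate_general hθ.le hstat htb hst
end
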